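/- Let X, Y ∈ SL(2,ℝ) with |tr(X)| > 2 and |tr(Y)| > 2, whose axes intersect at a point P and are distinct (P minimizes the displacement functions of both X and Y, and the two minimizing sets differ). Let S be the midpoint of P and X⁻¹·P, and let T be the midpoint of P and Y·P. Then the translation length of Y·X equals 2·dist(S,T), i.e. inf_{z ∈ ℍ} dist(z, (Y·X)·z) = 2·dist(S,T); moreover S and T lie on the axis of Y·X, with dist(S, (Y·X)·S) = 2·dist(S,T), and |tr(Y·X)| = 2·cosh(dist(S,T)). -/

import Mathlib

open UpperHalfPlane Matrix
open scoped MatrixGroups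

/-! Let `J z` be the half-turn about `z`, normalised in `SL(2, ℝ)`, so that `J z * J z = -1`.
The form `(A, B) ↦ tr (A * B)` on trace-zero matrices gives `tr (J z * J w) = -2 cosh (dist z w)`
and `2 cosh (dist z (g • z)) = tr g ^ 2 + tr (g * J z) ^ 2 - 2`, so the axis of a hyperbolic `g`
is cut out by `tr (g * J z) = 0`. For `z` on the axis, `J z` conjugates `g⁻¹` to `g`, hence
`J z + J (g • z) = tr g • (g * J z)`; as the left side is a multiple of `J M`, where `M` is the
midpoint of `z` and `g • z`, it follows that `g = ±(J M * J z)`. Thus `Y = ±(J T * J P)` and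
`X = ±(J P * J S)`, the two half-turns about `P` cancel in the product, and
`Y * X = ±(J T * J S)`. -/

section SpecialLinearGroup

variable {R : Type*} [CommRing R]

lemma det_two_smul_sub_trace_smul_one (A : Matrix (Fin 2) (Fin 2) R) :
    ((2 : R) • A - A.trace • 1).det = 4 * A.det - A.trace ^ 2 := by
  simp only [det_fin_two, trace_fin_two, Matrix.sub_apply, Matrix.smul_apply, smul_eq_mul,
    one_apply_eq, one_apply_ne, ne_eq, zero_ne_one, one_ne_zero, not_false_eq_true]
  ring

local notation:1024 "↑ₘ" A:1024 => ((A : SL(2, R)) : Matrix (Fin 2) (Fin 2) R)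

lemma sl2_coe_add_coe_inv (A : SL(2, R)) : ↑ₘA + ↑ₘ(A⁻¹) = (↑ₘA).trace • 1 := by
  ext i j
  fin_cases i <;> fin_cases j <;> simp [adjugate_fin_two, trace_fin_two, add_comm]

lemma sl2_inv_eq_neg_of_trace_eq_zero {A : SL(2, R)} (hA : (↑ₘA).trace = 0) : A⁻¹ = -A := by
  have h := sl2_coe_add_coe_inv A
  rw [hA, zero_smul] at h
  exact Subtype.ext (eq_neg_of_add_eq_zero_right h)

lemma sl2_trace_mul_comm (A B : SL(2, R)) : (↑ₘ(A * B)).trace = (↑ₘ(B * A)).trace := by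
  simp only [Matrix.SpecialLinearGroup.coe_mul, trace_mul_comm ↑ₘA]

lemma sl2_trace_mul_add_trace_mul_inv (A B : SL(2, R)) :
    (↑ₘ(A * B)).trace + (↑ₘ(A * B⁻¹)).trace = (↑ₘA).trace * (↑ₘB).trace := by
  simp only [Matrix.SpecialLinearGroup.coe_mul]
  rw [← trace_add, ← mul_add, sl2_coe_add_coe_inv, mul_smul_comm, mul_one, trace_smul, smul_eq_mul,
    mul_comm]

lemma sl2_trace_mul_self (A : SL(2, R)) : (↑ₘ(A * A)).trace = (↑ₘA).trace ^ 2 - 2 := by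
  have h := sl2_trace_mul_add_trace_mul_inv A A
  rw [mul_inv_cancel, Matrix.SpecialLinearGroup.coe_one, trace_one, Fintype.card_fin] at h
  push_cast at h
  linear_combination h

lemma sl2_eq_or_eq_neg_of_smul_eq_smul [IsDomain R] {A B : SL(2, R)} {a b : R} (ha : a ≠ 0)
    (h : a • ↑ₘA = b • ↑ₘB) : A = B ∨ A = -B := by
  have hab : a ^ 2 = b ^ 2 := by simpa [det_smul] using congrArg Matrix.det h
  rcases sq_eq_sq_iff_eq_or_eq_neg.mp hab with rfl | rfl
  · exact .inl (Subtype.ext (smul_right_injective _ ha h))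
  · refine .inr (Subtype.ext (smul_right_injective _ ha ?_))
    simpa using h

end SpecialLinearGroup

local notation:1024 "↑ₘ" A:1024 => ((A : SL(2, ℝ)) : Matrix (Fin 2) (Fin 2) ℝ)

section HalfTurn

/-- The rotation by `π` about `z`, as an element of `SL(2, ℝ)`. Of its two lifts we choose the one
with positive lower left entry, namely the conjugate by `z.toSL2R` (which maps `I` to `z`) of
`S = !![0, -1; 1, 0]`, the half-turn about `I`. -/
noncomputable def halfTurn (z : ℍ) : SL(2, ℝ) :=
  z.toSL2R * (ModularGroup.S : SL(2, ℝ)) * z.toSL2R⁻¹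

lemma coe_halfTurn (z : ℍ) :
    ↑ₘ(halfTurn z) =
      !![z.re / z.im, -((z.re ^ 2 + z.im ^ 2) / z.im); 1 / z.im, -(z.re / z.im)] := by
  have hy : √z.im ^ 2 = z.im := Real.sq_sqrt z.im_pos.le
  have hy' : √z.im ^ 4 = z.im ^ 2 := by rw [pow_mul (√z.im) 2 2, hy]
  have hy₀ : √z.im ≠ 0 := (Real.sqrt_pos.mpr z.im_pos).ne'
  ext i j
  fin_cases i <;> fin_cases j <;>
    simp [halfTurn, adjugate_fin_two, mul_apply, vecMul, dotProduct] <;>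
    field_simp <;> simp only [hy, hy'] <;> ring

lemma halfTurn_mul_self (z : ℍ) : halfTurn z * halfTurn z = -1 := by
  have hS : (ModularGroup.S : SL(2, ℝ)) * (ModularGroup.S : SL(2, ℝ)) = -1 := by
    ext i j
    fin_cases i <;> fin_cases j <;> simp [mul_apply]
  calc halfTurn z * halfTurn z
      = z.toSL2R * (ModularGroup.S * ModularGroup.S : SL(2, ℝ)) * z.toSL2R⁻¹ := by
        simp only [halfTurn]; group
    _ = -1 := by simp [hS]

lemma trace_halfTurn (z : ℍ) : (↑ₘ(halfTurn z)).trace = 0 := by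
  simp [coe_halfTurn, trace_fin_two]

lemma commute_S_of_smul_I {g : SL(2, ℝ)} (hg : g • I = I) :
    Commute g (ModularGroup.S : SL(2, ℝ)) := by
  obtain ⟨hdiag, hoff⟩ := (gl_smul_I_eq_I_iff_of_pos (g := (g : GL (Fin 2) ℝ)) (by simp)).mp hg
  simp only [Matrix.SpecialLinearGroup.coe_GL_coe_matrix] at hdiag hoff
  ext i j
  fin_cases i <;> fin_cases j <;> simp [mul_apply, hdiag, hoff]

lemma halfTurn_smul (g : SL(2, ℝ)) (z : ℍ) : halfTurn (g • z) = g * halfTurn z * g⁻¹ := by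
  set k := (g • z).toSL2R⁻¹ * g * z.toSL2R with hk
  have hfix : k • I = I := by
    rw [hk, mul_smul, mul_smul, toSL2R_smul_I, inv_smul_eq_iff, toSL2R_smul_I]
  rw [halfTurn, ← (commute_S_of_smul_I hfix).mul_inv_cancel, hk, halfTurn]
  group

lemma trace_mul_halfTurn (A : Matrix (Fin 2) (Fin 2) ℝ) (z : ℍ) :
    (A * ↑ₘ(halfTurn z)).trace =
      ((A 0 0 - A 1 1) * z.re + A 0 1 - A 1 0 * (z.re ^ 2 + z.im ^ 2)) / z.im := by
  simp only [coe_halfTurn, trace_fin_two, mul_apply, Fin.sum_univ_two]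
  simp only [of_apply, cons_val', cons_val_zero, cons_val_fin_one, cons_val_one]
  ring

lemma trace_halfTurn_mul_halfTurn (z w : ℍ) :
    (↑ₘ(halfTurn z * halfTurn w)).trace = -2 * Real.cosh (dist z w) := by
  rw [Matrix.SpecialLinearGroup.coe_mul, trace_mul_halfTurn, coe_halfTurn,
    UpperHalfPlane.cosh_dist']
  have := z.im_ne_zero
  have := w.im_ne_zero
  simp only [of_apply, cons_val', cons_val_zero, cons_val_fin_one, cons_val_one]
  field_simp
  ring

lemma two_mul_cosh_dist_smul (g : SL(2, ℝ)) (z : ℍ) :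
    2 * Real.cosh (dist z (g • z)) = (↑ₘg).trace ^ 2 + (↑ₘ(g * halfTurn z)).trace ^ 2 - 2 := by
  have hdist : (↑ₘ(halfTurn z * g * halfTurn z * g⁻¹)).trace = -2 * Real.cosh (dist z (g • z)) := by
    rw [← trace_halfTurn_mul_halfTurn, halfTurn_smul]
    simp only [mul_assoc]
  have hsq : (↑ₘ(halfTurn z * g * halfTurn z * g)).trace = (↑ₘ(g * halfTurn z)).trace ^ 2 - 2 := by
    rw [← sl2_trace_mul_self, mul_assoc, mul_assoc, sl2_trace_mul_comm]
    simp only [mul_assoc]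
  have hconj : (↑ₘ(halfTurn z * g * halfTurn z)).trace = -(↑ₘg).trace := by
    rw [sl2_trace_mul_comm, ← mul_assoc, halfTurn_mul_self, neg_one_mul,
      Matrix.SpecialLinearGroup.coe_neg, trace_neg]
  have hfricke := sl2_trace_mul_add_trace_mul_inv (halfTurn z * g * halfTurn z) g
  rw [hdist, hsq, hconj] at hfricke
  linear_combination -hfricke

lemma halfTurn_mul_inv {g : SL(2, ℝ)} {z : ℍ} (h : (↑ₘ(g * halfTurn z)).trace = 0) :
    halfTurn z * g⁻¹ = g * halfTurn z := by
  have hinv := sl2_inv_eq_neg_of_trace_eq_zero h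
  rwa [_root_.mul_inv_rev, sl2_inv_eq_neg_of_trace_eq_zero (trace_halfTurn z), neg_mul,
    neg_inj] at hinv

lemma halfTurn_add_halfTurn_smul {g : SL(2, ℝ)} {z : ℍ} (h : (↑ₘ(g * halfTurn z)).trace = 0) :
    ↑ₘ(halfTurn z) + ↑ₘ(halfTurn (g • z)) = (↑ₘg).trace • ↑ₘ(g * halfTurn z) := by
  have hleft : halfTurn z = g⁻¹ * (g * halfTurn z) := by group
  have hright : halfTurn (g • z) = g * (g * halfTurn z) := by
    rw [halfTurn_smul, mul_assoc, halfTurn_mul_inv h]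
  rw [hright]
  nth_rewrite 1 [hleft]
  rw [Matrix.SpecialLinearGroup.coe_mul g⁻¹, Matrix.SpecialLinearGroup.coe_mul g (g * _),
    ← add_mul, add_comm, sl2_coe_add_coe_inv, smul_mul_assoc, one_mul]

end HalfTurn

section Midpoint

lemma eq_zero_of_trace_mul_halfTurn_eq_zero {V : Matrix (Fin 2) (Fin 2) ℝ} {z : ℍ}
    (htr : V.trace = 0) (hsq : (V * V).trace = 0) (hz : (V * ↑ₘ(halfTurn z)).trace = 0) :
    V = 0 := by
  have hy := z.im_ne_zero
  rw [trace_fin_two] at htr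
  have h11 : V 1 1 = -V 0 0 := by linarith
  rw [trace_mul_halfTurn, div_eq_zero_iff, or_iff_left hy] at hz
  simp only [trace_fin_two, mul_apply, Fin.sum_univ_two] at hsq
  rw [h11] at hz hsq
  have hsum : (V 0 0 - V 1 0 * z.re) ^ 2 + (V 1 0 * z.im) ^ 2 = 0 := by
    linear_combination hsq / 2 - V 1 0 * hz
  obtain ⟨h00, h10⟩ := (add_eq_zero_iff_of_nonneg (sq_nonneg _) (sq_nonneg _)).mp hsum
  have h10 : V 1 0 = 0 := by simpa [hy] using h10
  have h00 : V 0 0 = 0 := by simpa [h10] using h00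
  have h01 : V 0 1 = 0 := by simpa [h10, h00] using hz
  ext i j
  fin_cases i <;> fin_cases j <;> simp [h00, h01, h10, h11]

lemma halfTurn_add_halfTurn_of_midpoint {P Q M : ℍ} (h : dist P M = dist M Q)
    (h' : dist P M + dist M Q = dist P Q) :
    ↑ₘ(halfTurn P) + ↑ₘ(halfTurn Q) = (2 * Real.cosh (dist P M)) • ↑ₘ(halfTurn M) := by
  have hPQ : Real.cosh (dist P Q) = 2 * Real.cosh (dist P M) ^ 2 - 1 := by
    rw [← h', ← h, ← two_mul, Real.cosh_two_mul, Real.sinh_sq]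
    ring
  have hQM : dist Q M = dist P M := by rw [h, dist_comm]
  have hform (z w : ℍ) : (↑ₘ(halfTurn z) * ↑ₘ(halfTurn w)).trace =
      -2 * Real.cosh (dist z w) := trace_halfTurn_mul_halfTurn z w
  rw [← sub_eq_zero]
  apply eq_zero_of_trace_mul_halfTurn_eq_zero (z := M)
  · simp [trace_halfTurn]
  · simp only [add_mul, sub_mul, mul_add, mul_sub, trace_add, trace_sub, Matrix.smul_mul,
      Matrix.mul_smul, trace_smul, hform, dist_self, dist_comm Q P, dist_comm M, hPQ, hQM,
      Real.cosh_zero, smul_eq_mul]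
    ring
  · simp only [add_mul, sub_mul, trace_add, trace_sub, Matrix.smul_mul, trace_smul, hform,
      dist_self, hQM, Real.cosh_zero, smul_eq_mul]
    ring

lemma halfTurn_midpoint_eq_or_eq_neg {g : SL(2, ℝ)} {P M : ℍ}
    (hP : (↑ₘ(g * halfTurn P)).trace = 0) (h : dist P M = dist M (g • P))
    (h' : dist P M + dist M (g • P) = dist P (g • P)) :
    halfTurn M = g * halfTurn P ∨ halfTurn M = -(g * halfTurn P) :=
  sl2_eq_or_eq_neg_of_smul_eq_smul (a := 2 * Real.cosh (dist P M)) (b := (↑ₘg).trace)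
    (by positivity)
    (by rw [← halfTurn_add_halfTurn_of_midpoint h h', halfTurn_add_halfTurn_smul hP])

lemma mul_eq_or_eq_neg_halfTurn_mul_halfTurn {X Y : SL(2, ℝ)} {P S T : ℍ}
    (hX : (↑ₘ(X * halfTurn P)).trace = 0) (hY : (↑ₘ(Y * halfTurn P)).trace = 0)
    (hS : dist P S = dist S (X⁻¹ • P)) (hS' : dist P S + dist S (X⁻¹ • P) = dist P (X⁻¹ • P))
    (hT : dist P T = dist T (Y • P)) (hT' : dist P T + dist T (Y • P) = dist P (Y • P)) :
    Y * X = halfTurn T * halfTurn S ∨ Y * X = -(halfTurn T * halfTurn S) := by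
  have hcomm : halfTurn P * X⁻¹ = X * halfTurn P := halfTurn_mul_inv hX
  have hX' : (↑ₘ(X⁻¹ * halfTurn P)).trace = 0 := by
    rwa [sl2_trace_mul_comm, hcomm]
  have hprod : Y * halfTurn P * (X⁻¹ * halfTurn P) = -(Y * X) := by
    calc Y * halfTurn P * (X⁻¹ * halfTurn P)
        = Y * (halfTurn P * X⁻¹) * halfTurn P := by group
      _ = Y * X * (halfTurn P * halfTurn P) := by rw [hcomm]; group
      _ = -(Y * X) := by rw [halfTurn_mul_self, mul_neg_one]
  rcases halfTurn_midpoint_eq_or_eq_neg hX' hS hS' with h | h <;>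
    rcases halfTurn_midpoint_eq_or_eq_neg hY hT hT' with h' | h' <;>
    simp [h, h', hprod]

end Midpoint

section Axis

/-- The points of minimal displacement of `g`; for hyperbolic `g` this is its axis. -/
def axis (g : SL(2, ℝ)) : Set ℍ :=
  {z | ∀ w : ℍ, dist z (g • z) ≤ dist w (g • w)}

lemma iInf_dist_smul_of_mem_axis {g : SL(2, ℝ)} {z : ℍ} (hz : z ∈ axis g) :
    ⨅ w : ℍ, dist w (g • w) = dist z (g • z) :=
  IsGLB.ciInf_eq (IsLeast.isGLB ⟨⟨z, rfl⟩, Set.forall_mem_range.mpr hz⟩)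

lemma neg_smul_eq_smul (g : SL(2, ℝ)) (z : ℍ) : -g • z = g • z := by
  ext
  simp only [coe_specialLinearGroup_apply, Matrix.SpecialLinearGroup.coe_neg, Matrix.neg_apply,
    Algebra.algebraMap_self, Real.ringHom_apply, Complex.ofReal_neg, neg_mul]
  rw [← neg_add, ← neg_add, neg_div_neg_eq]

lemma axis_neg (g : SL(2, ℝ)) : axis (-g) = axis g := by
  simp only [axis, neg_smul_eq_smul]

lemma mem_axis_of_trace_eq_zero {g : SL(2, ℝ)} {z : ℍ} (hz : (↑ₘ(g * halfTurn z)).trace = 0) :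
    z ∈ axis g := by
  intro w
  have hz' := two_mul_cosh_dist_smul g z
  have hw' := two_mul_cosh_dist_smul g w
  rw [hz] at hz'
  rw [← abs_of_nonneg (dist_nonneg (x := z)), ← abs_of_nonneg (dist_nonneg (x := w)),
    ← Real.cosh_le_cosh]
  nlinarith

lemma exists_trace_mul_halfTurn_eq_zero {A : Matrix (Fin 2) (Fin 2) ℝ} (htr : A.trace = 0)
    (hdet : A.det < 0) : ∃ z : ℍ, (A * ↑ₘ(halfTurn z)).trace = 0 := by
  -- `A` acts on `ℍ` as the reflection in a geodesic; we take `z` on that geodesic.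
  let r : GL (Fin 2) ℝ := .mkOfDetNeZero A hdet.ne
  obtain ⟨z, hz⟩ := (exists_gl_smul_eq_self_iff_trace_eq_zero (g := r) hdet).mpr htr
  have hfix : A 0 0 * z.re + A 0 1 = A 1 0 * (z.re ^ 2 + z.im ^ 2) + A 1 1 * z.re := by
    have hnum := congrArg Complex.re (gl_smul_eq_iff_num_eq.mp hz)
    simp only [r, num, denom, σ, Matrix.GeneralLinearGroup.val_mkOfDetNeZero,
      Matrix.GeneralLinearGroup.val_det_apply, hdet.not_gt, ↓reduceIte, Complex.conjCAE_apply,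
      Complex.conj_re, Complex.conj_im, Complex.add_re, Complex.add_im, Complex.mul_re,
      Complex.mul_im, Complex.ofReal_re, Complex.ofReal_im, coe_re, coe_im, zero_mul,
      add_zero, sub_zero] at hnum
    linear_combination hnum
  refine ⟨z, ?_⟩
  rw [trace_mul_halfTurn, div_eq_zero_iff]
  exact .inl (by linear_combination hfix)

lemma trace_mul_halfTurn_eq_zero_of_mem_axis {g : SL(2, ℝ)} (hg : |(↑ₘg).trace| > 2) {z : ℍ}
    (hz : z ∈ axis g) : (↑ₘ(g * halfTurn z)).trace = 0 := by
  obtain ⟨w, hw⟩ : ∃ w : ℍ, (↑ₘ(g * halfTurn w)).trace = 0 := by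
    let A : Matrix (Fin 2) (Fin 2) ℝ := (2 : ℝ) • ↑ₘg - (↑ₘg).trace • 1
    have htr : A.trace = 0 := by simp [A, mul_comm]
    have hdet : A.det < 0 := by
      rw [det_two_smul_sub_trace_smul_one, g.det_coe]
      nlinarith [sq_abs (↑ₘg).trace]
    obtain ⟨w, hw⟩ := exists_trace_mul_halfTurn_eq_zero htr hdet
    refine ⟨w, ?_⟩
    simpa [A, sub_mul, trace_halfTurn] using hw
  have hzw := Real.cosh_le_cosh.mpr (abs_le_abs_of_nonneg dist_nonneg (hz w))
  have hz' := two_mul_cosh_dist_smul g z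
  have hw' := two_mul_cosh_dist_smul g w
  rw [hw] at hw'
  exact (sq_nonpos_iff _).mp (by linarith)

lemma left_mem_axis_halfTurn_mul_halfTurn (z w : ℍ) : z ∈ axis (halfTurn z * halfTurn w) := by
  apply mem_axis_of_trace_eq_zero
  rw [sl2_trace_mul_comm, ← mul_assoc, halfTurn_mul_self]
  simp [trace_halfTurn]

lemma right_mem_axis_halfTurn_mul_halfTurn (z w : ℍ) : w ∈ axis (halfTurn z * halfTurn w) := by
  apply mem_axis_of_trace_eq_zero
  rw [mul_assoc, halfTurn_mul_self]
  simp [trace_halfTurn]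

lemma dist_halfTurn_mul_halfTurn_smul (z w : ℍ) :
    dist w ((halfTurn z * halfTurn w) • w) = 2 * dist z w := by
  refine Real.cosh_injOn dist_nonneg (mul_nonneg zero_le_two dist_nonneg) ?_
  have h := two_mul_cosh_dist_smul (halfTurn z * halfTurn w) w
  rw [mul_assoc _ _ (halfTurn w), halfTurn_mul_self, trace_halfTurn_mul_halfTurn] at h
  simp only [mul_neg, mul_one, Matrix.SpecialLinearGroup.coe_neg, trace_neg, trace_halfTurn] at h
  rw [Real.cosh_two_mul, Real.sinh_sq]
  linarith

lemma abs_trace_halfTurn_mul_halfTurn (z w : ℍ) :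
    |(↑ₘ(halfTurn z * halfTurn w)).trace| = 2 * Real.cosh (dist z w) := by
  rw [trace_halfTurn_mul_halfTurn, neg_mul, abs_neg, abs_of_pos (by positivity)]

end Axis

theorem axis_and_length_of_product_general {X Y : SL(2, ℝ)}
    (hX : |(↑ₘX).trace| > 2) (hY : |(↑ₘY).trace| > 2) {P S T : ℍ}
    (hPX : P ∈ axis X) (hPY : P ∈ axis Y)
    (hS : dist P S = dist S (X⁻¹ • P) ∧ dist P S + dist S (X⁻¹ • P) = dist P (X⁻¹ • P))
    (hT : dist P T = dist T (Y • P) ∧ dist P T + dist T (Y • P) = dist P (Y • P)) :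
    (⨅ z : ℍ, dist z ((Y * X) • z)) = 2 * dist S T ∧
    dist S ((Y * X) • S) = 2 * dist S T ∧
    S ∈ axis (Y * X) ∧ T ∈ axis (Y * X) ∧
    |(↑ₘ(Y * X)).trace| = 2 * Real.cosh (dist S T) := by
  have hprod : Y * X = halfTurn T * halfTurn S ∨ Y * X = -(halfTurn T * halfTurn S) :=
    mul_eq_or_eq_neg_halfTurn_mul_halfTurn (trace_mul_halfTurn_eq_zero_of_mem_axis hX hPX)
      (trace_mul_halfTurn_eq_zero_of_mem_axis hY hPY) hS.1 hS.2 hT.1 hT.2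
  have haxis : axis (Y * X) = axis (halfTurn T * halfTurn S) := by
    rcases hprod with h | h <;> simp only [h, axis_neg]
  have hSaxis : S ∈ axis (Y * X) := haxis ▸ right_mem_axis_halfTurn_mul_halfTurn T S
  have hTaxis : T ∈ axis (Y * X) := haxis ▸ left_mem_axis_halfTurn_mul_halfTurn T S
  have hlength : dist S ((Y * X) • S) = 2 * dist S T := by
    rw [dist_comm S T, ← dist_halfTurn_mul_halfTurn_smul]
    rcases hprod with h | h <;> simp only [h, neg_smul_eq_smul]
  refine ⟨(iInf_dist_smul_of_mem_axis hSaxis).trans hlength, hlength, hSaxis, hTaxis, ?_⟩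
  rw [dist_comm S T, ← abs_trace_halfTurn_mul_halfTurn]
  rcases hprod with h | h <;> simp only [h, Matrix.SpecialLinearGroup.coe_neg, trace_neg, abs_neg]

/-- If the axes of hyperbolic X and Y cross at P and are distinct, and S, T
are the midpoints of P, X⁻¹·P and of P, Y·P respectively, then the
translation length of Y·X is 2·dist(S,T), S and T lie on the axis of Y·X,
and |tr(Y·X)| = 2·cosh(dist(S,T)). -/
theorem axis_and_length_of_product (X Y : SL(2, ℝ))
    (hX : |Matrix.trace (X : Matrix (Fin 2) (Fin 2) ℝ)| > 2)
    (hY : |Matrix.trace (Y : Matrix (Fin 2) (Fin 2) ℝ)| > 2)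
    (P S T : ℍ)
    (hPX : ∀ w : ℍ, dist P (X • P) ≤ dist w (X • w))
    (hPY : ∀ w : ℍ, dist P (Y • P) ≤ dist w (Y • w))
    (haxes : {z : ℍ | ∀ w : ℍ, dist z (X • z) ≤ dist w (X • w)} ≠
             {z : ℍ | ∀ w : ℍ, dist z (Y • z) ≤ dist w (Y • w)})
    (hS : dist P S = dist S (X⁻¹ • P) ∧ dist P S + dist S (X⁻¹ • P) = dist P (X⁻¹ • P))
    (hT : dist P T = dist T (Y • P) ∧ dist P T + dist T (Y • P) = dist P (Y • P)) :
    (⨅ z : ℍ, dist z ((Y * X) • z)) = 2 * dist S T ∧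
    dist S ((Y * X) • S) = 2 * dist S T ∧
    (∀ w : ℍ, dist S ((Y * X) • S) ≤ dist w ((Y * X) • w)) ∧
    (∀ w : ℍ, dist T ((Y * X) • T) ≤ dist w ((Y * X) • w)) ∧
    |Matrix.trace ((Y * X : SL(2, ℝ)) : Matrix (Fin 2) (Fin 2) ℝ)| =
      2 * Real.cosh (dist S T) :=
  axis_and_length_of_product_general hX hY hPX hPY hS hT
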